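/- Let S be a finite nonempty type, let M : Matrix S S ℝ be row-stochastic, let r, V : S → ℝ and g ∈ ℝ. Suppose the Bellman super-solution inequality holds: V s ≥ r s − g + ∑_{s'} M s s' · V s' for every s ∈ S. Then for every s ∈ S, limsup_{T → ∞} (1/T)·∑_{t=0}^{T−1} (Mᵗ.mulVec r) s ≤ g. (Comparison principle: a super-solution of the average-cost Bellman equation upper-bounds the long-run average cost for the corresponding transition matrix; used to show that the robust Bellman equation bounds the average cost of every kernel in the uncertainty set.) -/

import Mathlib

/-!
Each power `M ^ t` is row-stochastic, hence acts monotonically on vectors and fixes constants.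
Applying `M ^ t` to the Bellman inequality `r ≤ g + V - M V` gives
`M ^ t r ≤ g + M ^ t V - M ^ (t + 1) V`, which telescopes to
`∑_{t < T} M ^ t r ≤ T g + V - M ^ T V` (`sum_cost_le`). Since `V` is bounded, so is `M ^ T V`,
and dividing by `T` leaves `g + O(1 / T)`. As the real-valued `limsup` is a junk value for
sequences tending to `-∞`, the comparison also uses that the averages are bounded below by a lower
bound of `r`.
-/

open Filter Topology Matrix

/-- A row-stochastic matrix maps a vector to weighted averages of its entries, so a lower bound on
the entries is preserved. -/
lemma le_mulVec_of_rowStochastic {S : Type*} [Fintype S] [DecidableEq S]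
    {P : Matrix S S ℝ} (hP : P ∈ rowStochastic ℝ S) {v : S → ℝ} {c : ℝ}
    (hv : ∀ s, c ≤ v s) (s : S) : c ≤ (P *ᵥ v) s := by
  obtain ⟨h0, h1⟩ := mem_rowStochastic_iff_sum.1 hP
  calc c = ∑ j, P s j * c := by rw [← Finset.sum_mul, h1, one_mul]
    _ ≤ ∑ j, P s j * v j :=
      Finset.sum_le_sum fun j _ => mul_le_mul_of_nonneg_left (hv j) (h0 s j)

/-- The telescoped Bellman inequality. -/
lemma sum_cost_le {S : Type*} [Fintype S] [DecidableEq S]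
    {M : Matrix S S ℝ} (hM : M ∈ rowStochastic ℝ S) {r V : S → ℝ} {g : ℝ}
    (hbell : ∀ s, V s ≥ r s - g + (M *ᵥ V) s) (s : S) (T : ℕ) :
    ∑ t ∈ Finset.range T, ((M ^ t) *ᵥ r) s ≤ T * g + V s - ((M ^ T) *ᵥ V) s := by
  induction T with
  | zero => simp
  | succ T ih =>
    have h : -g ≤ ((M ^ T) *ᵥ (V - r - M *ᵥ V)) s :=
      le_mulVec_of_rowStochastic (pow_mem hM T)
        (fun j => by have := hbell j; simp only [Pi.sub_apply]; linarith) s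
    simp only [mulVec_sub, mulVec_mulVec, ← pow_succ, Pi.sub_apply] at h
    rw [Finset.sum_range_succ]
    push_cast
    linarith

/-- comparison principle. If `(g, V)` is a super-solution of the
average-cost Bellman equation, `V s ≥ r s − g + ∑_{s'} M s s' · V s'` for a
row-stochastic matrix `M`, then for every starting state `s`,
`limsup_{T→∞} (1/T)·∑_{t<T} (Mᵗ.mulVec r) s ≤ g`. -/
theorem bellman_supersolution_bounds_average_cost
    {S : Type*} [Fintype S] [DecidableEq S] [Nonempty S]
    (M : Matrix S S ℝ) (hM0 : ∀ s s', 0 ≤ M s s') (hM1 : ∀ s, ∑ s', M s s' = 1)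
    (r V : S → ℝ) (g : ℝ)
    (hbell : ∀ s, V s ≥ r s - g + ∑ s', M s s' * V s') :
    ∀ s, Filter.limsup
      (fun T : ℕ => (1 / (T : ℝ)) * ∑ t ∈ Finset.range T, ((M ^ t).mulVec r) s)
      Filter.atTop ≤ g := by
  intro s
  have hM : M ∈ rowStochastic ℝ S := mem_rowStochastic_iff_sum.2 ⟨hM0, hM1⟩
  obtain ⟨c, hc⟩ := (Set.finite_range r).bddBelow
  obtain ⟨b, hb⟩ := (Set.finite_range V).bddBelow
  have hlow : ∀ᶠ T : ℕ in atTop,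
      c ≤ (1 / (T : ℝ)) * ∑ t ∈ Finset.range T, ((M ^ t) *ᵥ r) s := by
    filter_upwards [eventually_gt_atTop 0] with T hT
    have hT' : (0 : ℝ) < T := by exact_mod_cast hT
    have h := Finset.card_nsmul_le_sum (Finset.range T) (fun t => ((M ^ t) *ᵥ r) s) c
      fun t _ => le_mulVec_of_rowStochastic (pow_mem hM t) (fun j => hc ⟨j, rfl⟩) s
    rw [Finset.card_range, nsmul_eq_mul] at h
    rw [one_div_mul_eq_div, le_div_iff₀ hT']
    linarith
  have hup : ∀ᶠ T : ℕ in atTop,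
      (1 / (T : ℝ)) * ∑ t ∈ Finset.range T, ((M ^ t) *ᵥ r) s ≤ g + (V s - b) / T := by
    filter_upwards [eventually_gt_atTop 0] with T hT
    have hT' : (0 : ℝ) < T := by exact_mod_cast hT
    have h := sum_cost_le hM hbell s T
    have hV := le_mulVec_of_rowStochastic (pow_mem hM T) (fun j => hb ⟨j, rfl⟩) s
    rw [one_div_mul_eq_div, div_le_iff₀ hT', add_mul, div_mul_cancel₀ _ hT'.ne']
    linarith
  have hlim : Tendsto (fun T : ℕ => g + (V s - b) / (T : ℝ)) atTop (𝓝 g) := by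
    simpa using (tendsto_const_div_atTop_nhds_zero_nat (V s - b)).const_add g
  rw [← hlim.limsup_eq]
  exact limsup_le_limsup hup (isCoboundedUnder_le_of_eventually_le atTop hlow)
    hlim.isBoundedUnder_le
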